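/- Let p be an odd prime, let q ≥ 1 be an integer, let M ≥ 1 be an integer, and set θ = p^{−M} ∈ ℚ_p, so ‖θ‖_p > 1. Let f(x) = ((θx + q)/(x + θ + q − 1))², and let x₂ be a root in ℚ_p of x² + (2θ − θ² + 2q − 1)x + q² = 0 with ‖x₂‖_p = (‖q‖_p/‖θ‖_p)². Then: (i) the unit sphere is invariant under f, i.e. for every x ∈ ℚ_p with ‖x‖_p = 1 one has ‖f(x)‖_p = 1; (ii) for every x ∈ ℚ_p with ‖x‖_p < 1, the sequence of iterates f^[n](x) converges to x₂ as n → ∞ (in the topology of ℚ_p). -/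

import Mathlib

/-!
Write `f = g ^ 2` with `g x = (θ x + q) / (x + θ + q - 1)`, where `1 < ‖θ‖` and `‖q‖ < ‖θ‖`. On the
ball `‖x‖ < ‖θ‖` the denominator has constant norm `‖θ‖`, and `g x - g y` equals
`(x - y) (θ - 1) (θ + q)` divided by two such denominators, so `g` is an isometry there. As `g` maps
the closed ball of radius `r` about `0` into itself whenever `‖q‖ / ‖θ‖ ≤ r ≤ 1`, the factorization
`f x - f y = (g x + g y) (g x - g y)` makes `f` an `r`-Lipschitz self-map of that ball. If moreover
`r < 1` and the ball contains a fixed point, every orbit starting in the ball converges to it.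
-/

open Filter Function Metric Set Topology
open IsUltrametricDist (norm_add_eq_max_of_norm_ne_norm norm_add_le_max)
open scoped NNReal

theorem tendsto_iterate_of_lipschitzOnWith {X : Type*} [PseudoMetricSpace X] {f : X → X} {s : Set X}
    {r : ℝ≥0} {a x : X} (hf : LipschitzOnWith r f s) (hr : r < 1) (hs : MapsTo f s s)
    (ha : a ∈ s) (hfa : IsFixedPt f a) (hx : x ∈ s) :
    Tendsto (fun n => f^[n] x) atTop (𝓝 a) := by
  have hdist (n : ℕ) : dist (f^[n] x) a ≤ r ^ n * dist x a := by
    induction n with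
    | zero => simp
    | succ n ih =>
      calc dist (f^[n + 1] x) a
          = dist (f (f^[n] x)) (f a) := by rw [iterate_succ_apply', hfa]
        _ ≤ r * dist (f^[n] x) a := hf.dist_le_mul _ (hs.iterate n hx) _ ha
        _ ≤ r * (r ^ n * dist x a) := by gcongr
        _ = r ^ (n + 1) * dist x a := by ring
  have hgeom : Tendsto (fun n : ℕ => (r : ℝ) ^ n * dist x a) atTop (𝓝 0) := by
    simpa using (tendsto_pow_atTop_nhds_zero_of_lt_one r.coe_nonneg hr).mul_const (dist x a)
  exact tendsto_iff_dist_tendsto_zero.2 (squeeze_zero (fun _ => dist_nonneg) hdist hgeom)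

theorem norm_add_eq_left_of_norm_lt {G : Type*} [SeminormedAddGroup G] [IsUltrametricDist G]
    {a b : G} (h : ‖b‖ < ‖a‖) : ‖a + b‖ = ‖a‖ := by
  rw [norm_add_eq_max_of_norm_ne_norm h.ne', max_eq_left h.le]

section PottsMap

variable {K : Type*} [NormedField K]

/-- The Möbius transformation whose square is the Potts map `pottsMap`. -/
def pottsMobius (θ q x : K) : K := (θ * x + q) / (x + θ + q - 1)

/-- The recursion map of the `(q + 1)`-state Potts model on the Cayley tree of order two. The number
`q` is allowed to be an arbitrary element of the field. -/
def pottsMap (θ q x : K) : K := pottsMobius θ q x ^ 2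

variable {θ q x y : K}

theorem isFixedPt_pottsMap_iff (hx : x + θ + q - 1 ≠ 0) :
    IsFixedPt (pottsMap θ q) x ↔
      x = 1 ∨ x ^ 2 + (2 * θ - θ ^ 2 + 2 * q - 1) * x + q ^ 2 = 0 := by
  have hfactor : (θ * x + q) ^ 2 - x * (x + θ + q - 1) ^ 2 =
      -((x - 1) * (x ^ 2 + (2 * θ - θ ^ 2 + 2 * q - 1) * x + q ^ 2)) := by ring
  rw [IsFixedPt, pottsMap, pottsMobius, div_pow, div_eq_iff (pow_ne_zero 2 hx), ← sub_eq_zero,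
    hfactor, neg_eq_zero, mul_eq_zero, sub_eq_zero]

variable [IsUltrametricDist K]

theorem norm_pottsMobius_denom (hθ : 1 < ‖θ‖) (hq : ‖q‖ < ‖θ‖) (hx : ‖x‖ < ‖θ‖) :
    ‖x + θ + q - 1‖ = ‖θ‖ := by
  have hrest : ‖x + q + -1‖ < ‖θ‖ :=
    (norm_add_le_max _ _).trans_lt
      (max_lt ((norm_add_le_max _ _).trans_lt (max_lt hx hq)) (by simpa using hθ))
  rw [show x + θ + q - 1 = θ + (x + q + -1) by ring, norm_add_eq_left_of_norm_lt hrest]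

theorem pottsMobius_denom_ne_zero (hθ : 1 < ‖θ‖) (hq : ‖q‖ < ‖θ‖) (hx : ‖x‖ < ‖θ‖) :
    x + θ + q - 1 ≠ 0 := by
  rw [← norm_pos_iff, norm_pottsMobius_denom hθ hq hx]
  exact one_pos.trans hθ

theorem norm_pottsMobius_of_norm_eq_one (hθ : 1 < ‖θ‖) (hq : ‖q‖ < ‖θ‖) (hx : ‖x‖ = 1) :
    ‖pottsMobius θ q x‖ = 1 := by
  have hθx : ‖θ * x‖ = ‖θ‖ := by rw [norm_mul, hx, mul_one]
  rw [pottsMobius, norm_div, norm_add_eq_left_of_norm_lt (hq.trans_eq hθx.symm), hθx,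
    norm_pottsMobius_denom hθ hq (hx.trans_lt hθ), div_self (one_pos.trans hθ).ne']

theorem norm_pottsMobius_le (hθ : 1 < ‖θ‖) (hq : ‖q‖ < ‖θ‖) (hx : ‖x‖ < ‖θ‖) :
    ‖pottsMobius θ q x‖ ≤ max ‖x‖ (‖q‖ / ‖θ‖) := by
  have hθ0 : 0 < ‖θ‖ := one_pos.trans hθ
  calc ‖pottsMobius θ q x‖ = ‖θ * x + q‖ / ‖θ‖ := by
        rw [pottsMobius, norm_div, norm_pottsMobius_denom hθ hq hx]
    _ ≤ max ‖θ * x‖ ‖q‖ / ‖θ‖ := by gcongr; exact norm_add_le_max _ _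
    _ = max ‖x‖ (‖q‖ / ‖θ‖) := by
        rw [← max_div_div_right hθ0.le, norm_mul, mul_div_cancel_left₀ _ hθ0.ne']

theorem dist_pottsMobius (hθ : 1 < ‖θ‖) (hq : ‖q‖ < ‖θ‖) (hx : ‖x‖ < ‖θ‖) (hy : ‖y‖ < ‖θ‖) :
    dist (pottsMobius θ q x) (pottsMobius θ q y) = dist x y := by
  have hsub : pottsMobius θ q x - pottsMobius θ q y =
      (x - y) * ((θ + -1) * (θ + q)) / ((x + θ + q - 1) * (y + θ + q - 1)) := by
    rw [pottsMobius, pottsMobius, div_sub_div _ _ (pottsMobius_denom_ne_zero hθ hq hx)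
      (pottsMobius_denom_ne_zero hθ hq hy)]
    ring
  have hθ1 : ‖θ + -1‖ = ‖θ‖ := norm_add_eq_left_of_norm_lt (by simpa using hθ)
  have hθ0 : ‖θ‖ ≠ 0 := (one_pos.trans hθ).ne'
  rw [dist_eq_norm, dist_eq_norm, hsub, norm_div, norm_mul, norm_mul, norm_mul, hθ1,
    norm_add_eq_left_of_norm_lt hq, norm_pottsMobius_denom hθ hq hx,
    norm_pottsMobius_denom hθ hq hy, mul_div_cancel_right₀ _ (mul_ne_zero hθ0 hθ0)]

theorem mapsTo_pottsMobius_closedBall {r : ℝ} (hθ : 1 < ‖θ‖) (hq : ‖q‖ < ‖θ‖)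
    (hqr : ‖q‖ / ‖θ‖ ≤ r) (hr : r < ‖θ‖) :
    MapsTo (pottsMobius θ q) (closedBall 0 r) (closedBall 0 r) := by
  intro x hx
  rw [mem_closedBall_zero_iff] at hx ⊢
  exact (norm_pottsMobius_le hθ hq (hx.trans_lt hr)).trans (max_le hx hqr)

theorem mapsTo_pottsMap_closedBall {r : ℝ} (hθ : 1 < ‖θ‖) (hq : ‖q‖ < ‖θ‖)
    (hqr : ‖q‖ / ‖θ‖ ≤ r) (hr : r ≤ 1) :
    MapsTo (pottsMap θ q) (closedBall 0 r) (closedBall 0 r) := by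
  intro x hx
  have hg := mapsTo_pottsMobius_closedBall hθ hq hqr (hr.trans_lt hθ) hx
  rw [mem_closedBall_zero_iff] at hg ⊢
  rw [pottsMap, norm_pow]
  exact (pow_le_of_le_one (norm_nonneg _) (hg.trans hr) two_ne_zero).trans hg

theorem lipschitzOnWith_pottsMap {r : ℝ≥0} (hθ : 1 < ‖θ‖) (hq : ‖q‖ < ‖θ‖)
    (hqr : ‖q‖ / ‖θ‖ ≤ r) (hr : r < ‖θ‖) :
    LipschitzOnWith r (pottsMap θ q) (closedBall 0 r) := by
  refine LipschitzOnWith.of_dist_le_mul fun x hx y hy => ?_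
  have hg := mapsTo_pottsMobius_closedBall hθ hq hqr hr
  have hgx := mem_closedBall_zero_iff.1 (hg hx)
  have hgy := mem_closedBall_zero_iff.1 (hg hy)
  rw [mem_closedBall_zero_iff] at hx hy
  calc dist (pottsMap θ q x) (pottsMap θ q y)
      = ‖pottsMobius θ q x + pottsMobius θ q y‖ *
          dist (pottsMobius θ q x) (pottsMobius θ q y) := by
        rw [dist_eq_norm, dist_eq_norm, pottsMap, pottsMap, sq_sub_sq, norm_mul]
    _ = ‖pottsMobius θ q x + pottsMobius θ q y‖ * dist x y := by
        rw [dist_pottsMobius hθ hq (hx.trans_lt hr) (hy.trans_lt hr)]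
    _ ≤ r * dist x y := by
        gcongr
        exact (norm_add_le_max _ _).trans (max_le hgx hgy)

theorem tendsto_iterate_pottsMap {a : K} (hθ : 1 < ‖θ‖) (hq : ‖q‖ < ‖θ‖)
    (hfa : IsFixedPt (pottsMap θ q) a) (ha : ‖a‖ < 1) (hx : ‖x‖ < 1) :
    Tendsto (fun n => (pottsMap θ q)^[n] x) atTop (𝓝 a) := by
  let r : ℝ≥0 := max ‖x‖₊ (max ‖a‖₊ (‖q‖₊ / ‖θ‖₊))
  have hr : r < 1 := max_lt hx (max_lt ha ((div_lt_one (one_pos.trans hθ)).2 hq))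
  have hxr : ‖x‖₊ ≤ r := le_max_left _ _
  have har : ‖a‖₊ ≤ r := (le_max_left _ _).trans (le_max_right _ _)
  have hqr : ‖q‖₊ / ‖θ‖₊ ≤ r := (le_max_right _ _).trans (le_max_right _ _)
  exact tendsto_iterate_of_lipschitzOnWith
    (lipschitzOnWith_pottsMap hθ hq hqr (lt_trans hr hθ)) hr
    (mapsTo_pottsMap_closedBall hθ hq hqr hr.le)
    (mem_closedBall_zero_iff.2 har) hfa (mem_closedBall_zero_iff.2 hxr)

theorem stmt_17_general (hθ : 1 < ‖θ‖) (hq : ‖q‖ < ‖θ‖) {x₂ : K}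
    (h₂ : x₂ ^ 2 + (2 * θ - θ ^ 2 + 2 * q - 1) * x₂ + q ^ 2 = 0) (hn₂ : ‖x₂‖ < 1) :
    (∀ x : K, ‖x‖ = 1 → ‖pottsMap θ q x‖ = 1) ∧
    (∀ x : K, ‖x‖ < 1 → Tendsto (fun n => (pottsMap θ q)^[n] x) atTop (𝓝 x₂)) := by
  have hfix : IsFixedPt (pottsMap θ q) x₂ :=
    (isFixedPt_pottsMap_iff (pottsMobius_denom_ne_zero hθ hq (hn₂.trans hθ))).2 (.inr h₂)
  refine ⟨fun x hx => ?_, fun x hx => tendsto_iterate_pottsMap hθ hq hfix hn₂ hx⟩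
  rw [pottsMap, norm_pow, norm_pottsMobius_of_norm_eq_one hθ hq hx, one_pow]

end PottsMap

theorem one_lt_norm_inv_prime_pow (p : ℕ) [Fact p.Prime] {M : ℕ} (hM : M ≠ 0) :
    1 < ‖((p : ℚ_[p]) ^ M)⁻¹‖ := by
  have hp0 : (p : ℚ_[p]) ≠ 0 := NeZero.ne _
  rw [norm_inv, norm_pow]
  exact (one_lt_inv₀ (pow_pos (norm_pos_iff.2 hp0) M)).2
    (pow_lt_one₀ (norm_nonneg _) Padic.norm_p_lt_one hM)

theorem stmt_17 (p : ℕ) [Fact p.Prime] (hp2 : p ≠ 2)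
    (q : ℕ) (hq : 1 ≤ q) (M : ℕ) (hM : 1 ≤ M)
    (θ : ℚ_[p]) (hθ : θ = ((p : ℚ_[p]) ^ M)⁻¹)
    (f : ℚ_[p] → ℚ_[p])
    (hf : f = fun x => ((θ * x + q) / (x + θ + q - 1)) ^ 2)
    (x₂ : ℚ_[p])
    (h₂ : x₂ ^ 2 + (2 * θ - θ ^ 2 + 2 * q - 1) * x₂ + q ^ 2 = 0)
    (hn₂ : ‖x₂‖ = (‖(q : ℚ_[p])‖ / ‖θ‖) ^ 2) :
    (∀ x : ℚ_[p], ‖x‖ = 1 → ‖f x‖ = 1) ∧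
    (∀ x : ℚ_[p], ‖x‖ < 1 →
      Filter.Tendsto (fun n => f^[n] x) Filter.atTop (nhds x₂)) := by
  have hθ1 : 1 < ‖θ‖ := hθ ▸ one_lt_norm_inv_prime_pow p (Nat.one_le_iff_ne_zero.1 hM)
  have hqθ : ‖(q : ℚ_[p])‖ < ‖θ‖ :=
    (IsUltrametricDist.norm_natCast_le_one ℚ_[p] q).trans_lt hθ1
  have hx₂ : ‖x₂‖ < 1 := hn₂ ▸
    pow_lt_one₀ (by positivity) ((div_lt_one (one_pos.trans hθ1)).2 hqθ) two_ne_zero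
  subst hf
  exact stmt_17_general hθ1 hqθ h₂ hx₂
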